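/- arXiv:2107.13831 — 11 statements merged into one kernel-verified Lean document; each statement's English description precedes it below -/
import Mathlib

section
/- For every natural number n ≥ 2 there exists a simple graph on 2^⌊(n−2)/2⌋ vertices that contains neither an n-clique (a set of n pairwise adjacent vertices) nor an n-anticlique (a set of n pairwise non-adjacent vertices). Formally: there is a simple graph G on the vertex set Fin (2^⌊(n−2)/2⌋) such that G is n-clique-free and the complement of G is n-clique-free. -/
theorem ramsey_aux_card {α : Type*} [Fintype α] [DecidableEq α] (T : Finset α) (c : Bool) :
    (Finset.univ.filter (fun f : α → Bool => ∀ e ∈ T, f e = c)).card * 2 ^ T.card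
      = 2 ^ Fintype.card α := by
  have h : (Finset.univ.filter (fun f : α → Bool => ∀ e ∈ T, f e = c))
      = Fintype.piFinset (fun e => if e ∈ T then {c} else Finset.univ) := by
    ext f
    simp only [Finset.mem_filter, Finset.mem_univ, true_and, Fintype.mem_piFinset]
    refine forall_congr' fun e => ?_
    by_cases he : e ∈ T <;> simp [he]
  have h2 : (2 : ℕ) ^ T.card = ∏ e : α, if e ∈ T then 2 else 1 := by
    simp [Finset.prod_ite]
  rw [h, Fintype.card_piFinset, h2, ← Finset.prod_mul_distrib]
  rw [Finset.prod_congr rfl (g := fun _ => 2), Finset.prod_const, Finset.card_univ]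
  intro e _
  by_cases he : e ∈ T <;> simp [he]

theorem ramsey_aux_num (n : ℕ) (hn : 2 ≤ n) :
    2 * (2 ^ ((n - 2) / 2)).choose n < 2 ^ n.choose 2 := by
  set k := (n - 2) / 2 with hk
  have h1 : 2 * (2 ^ k).choose n ≤ (2 ^ k) ^ n := by
    calc 2 * (2 ^ k).choose n ≤ n.factorial * (2 ^ k).choose n :=
          Nat.mul_le_mul_right _ (hn.trans (Nat.self_le_factorial n))
      _ = (2 ^ k).descFactorial n := (Nat.descFactorial_eq_factorial_mul_choose _ _).symm
      _ ≤ (2 ^ k) ^ n := Nat.descFactorial_le_pow _ _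
  refine h1.trans_lt ?_
  rw [← pow_mul]
  refine Nat.pow_lt_pow_right (by norm_num) ?_
  rw [Nat.choose_two_right, Nat.lt_div_iff_mul_lt' (Nat.even_mul_pred_self n).two_dvd]
  obtain ⟨m, rfl⟩ := Nat.exists_eq_add_of_le hn
  have h3 : 2 * k ≤ m := by omega
  have h4 : 2 + m - 1 = m + 1 := by omega
  rw [h4]
  nlinarith

theorem erdos_ramsey_lower_bound (n : ℕ) (hn : 2 ≤ n) :
    ∃ G : SimpleGraph (Fin (2 ^ ((n - 2) / 2))),
      G.CliqueFree n ∧ Gᶜ.CliqueFree n := by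
  classical
  have hnum := ramsey_aux_num n hn
  generalize 2 ^ ((n - 2) / 2) = N at hnum ⊢
  let T : Finset (Fin N) → Finset (Sym2 (Fin N)) := fun S => S.offDiag.image (fun p => s(p.1, p.2))
  have hT : ∀ S, (T S).card = S.card.choose 2 := fun S => Sym2.card_image_offDiag S
  let A : Finset (Fin N) × Bool → Finset (Sym2 (Fin N) → Bool) := fun p =>
    Finset.univ.filter (fun f => ∀ e ∈ T p.1, f e = p.2)
  let I := (Finset.powersetCard n (Finset.univ : Finset (Fin N))) ×ˢ (Finset.univ : Finset Bool)
  have hI : I.card = 2 * N.choose n := by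
    simp [I, Finset.card_product, mul_comm]
  have key : ∃ f : Sym2 (Fin N) → Bool, f ∉ I.biUnion A := by
    by_contra! hall
    have h1 : 2 ^ Fintype.card (Sym2 (Fin N)) ≤ ∑ p ∈ I, (A p).card := by
      refine le_trans ?_ Finset.card_biUnion_le
      rw [Finset.eq_univ_iff_forall.mpr hall]
      simp
    have h2 : (∑ p ∈ I, (A p).card) * 2 ^ n.choose 2
        = I.card * 2 ^ Fintype.card (Sym2 (Fin N)) := by
      rw [Finset.sum_mul, ← smul_eq_mul, ← Finset.sum_const]
      refine Finset.sum_congr rfl fun p hp => ?_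
      have hc : p.1.card = n := by
        simp only [I, Finset.mem_product, Finset.mem_powersetCard] at hp
        exact hp.1.2
      rw [← hc, ← hT]
      exact ramsey_aux_card _ _
    have h3 : 0 < 2 ^ Fintype.card (Sym2 (Fin N)) := by positivity
    have h4 := Nat.mul_le_mul_right (2 ^ n.choose 2) h1
    rw [h2, hI, mul_comm] at h4
    exact absurd (Nat.le_of_mul_le_mul_right h4 h3) (not_le.mpr hnum)
  obtain ⟨f, hf⟩ := key
  have hf' : ∀ S : Finset (Fin N), S.card = n → ∀ c,
      ¬ ∀ a ∈ S, ∀ b ∈ S, a ≠ b → f s(a, b) = c := by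
    intro S hS c h
    apply hf
    refine Finset.mem_biUnion.mpr ⟨(S, c), ?_, ?_⟩
    · simp [I, Finset.mem_powersetCard, hS]
    · simp only [A, T, Finset.mem_filter, Finset.mem_univ, true_and, Finset.mem_image]
      rintro e ⟨⟨a, b⟩, hab, rfl⟩
      rw [Finset.mem_offDiag] at hab
      exact h a hab.1 b hab.2.1 hab.2.2
  refine ⟨SimpleGraph.fromEdgeSet {e | f e = true}, ?_, ?_⟩
  · intro S hS
    refine hf' S hS.card_eq true fun a ha b hb hab => ?_
    have := hS.isClique ha hb hab
    simp only [SimpleGraph.fromEdgeSet_adj, Set.mem_setOf_eq] at this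
    exact this.1
  · intro S hS
    refine hf' S hS.card_eq false fun a ha b hb hab => ?_
    have := hS.isClique ha hb hab
    simp only [SimpleGraph.compl_adj, SimpleGraph.fromEdgeSet_adj, Set.mem_setOf_eq] at this
    simpa [hab] using this.2
end

section
/- For all natural numbers n ≥ 2 and k ≥ 1 there exists a coloring of the edges of the complete graph on k^⌊(n−2)/2⌋ vertices with k colors such that there is no monochromatic n-clique. Formally: there is a function c from the 2-element subsets of Fin (k^⌊(n−2)/2⌋) to Fin k such that for every n-element subset S of the vertices and every color t, not all 2-element subsets of S are colored t by c. -/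
theorem bad_count {V : Type*} [Fintype V] [DecidableEq V] (k : ℕ) (P : Finset V) (t : Fin k) :
    (Finset.univ.filter (fun c : V → Fin k => ∀ e ∈ P, c e = t)).card * k ^ P.card
      = k ^ Fintype.card V := by
  have h : (Finset.univ.filter (fun c : V → Fin k => ∀ e ∈ P, c e = t))
      = Fintype.piFinset (fun e => if e ∈ P then ({t} : Finset (Fin k)) else Finset.univ) := by
    ext c
    simp only [Finset.mem_filter, Finset.mem_univ, true_and, Fintype.mem_piFinset]
    refine forall_congr' fun e => ?_
    by_cases he : e ∈ P <;> simp [he]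
  rw [h, Fintype.card_piFinset]
  have h2 : ∀ e, (if e ∈ P then ({t} : Finset (Fin k)) else Finset.univ).card
      = if e ∈ P then 1 else k := by
    intro e
    split_ifs <;> simp
  have h3 : k ^ P.card = ∏ e : V, if e ∈ P then k else 1 := by
    simp [Finset.prod_ite]
  rw [h3, ← Finset.prod_mul_distrib]
  have h4 : ∀ e : V, (if e ∈ P then ({t} : Finset (Fin k)) else Finset.univ).card *
      (if e ∈ P then k else 1) = k := by
    intro e
    rw [h2]
    split_ifs <;> simp
  simp only [h4]
  simp

theorem erdos_ramsey_multicolor (n k : ℕ) (hn : 2 ≤ n) (hk : 1 ≤ k) :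
    ∃ c : Finset (Fin (k ^ ((n - 2) / 2))) → Fin k,
      ∀ S : Finset (Fin (k ^ ((n - 2) / 2))), S.card = n →
        ∀ t : Fin k, ¬ (∀ e ⊆ S, e.card = 2 → c e = t) := by
  obtain hlt | hge := lt_or_ge (k ^ ((n - 2) / 2)) n
  · refine ⟨fun _ => ⟨0, hk⟩, fun S hS => ?_⟩
    have := Finset.card_le_univ S
    simp at this
    omega
  have hk2 : 2 ≤ k := by
    by_contra h
    have : k = 1 := by omega
    subst this
    simp at hge
    omega
  have hn3 : 3 ≤ n := by
    by_contra h
    have : n = 2 := by omega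
    subst this
    simp at hge
  by_contra hcon
  push Not at hcon
  generalize hm : (n - 2) / 2 = m at *
  let A := (Finset.powersetCard n (Finset.univ : Finset (Fin (k ^ m)))) ×ˢ
    (Finset.univ : Finset (Fin k))
  let B : Finset (Fin (k ^ m)) × Fin k → Finset (Finset (Fin (k ^ m)) → Fin k) := fun p =>
    Finset.univ.filter (fun c => ∀ e ∈ Finset.powersetCard 2 p.1, c e = p.2)
  have hcover : (Finset.univ : Finset (Finset (Fin (k ^ m)) → Fin k)) ⊆ A.biUnion B := by
    intro c _
    obtain ⟨S, hS, t, h⟩ := hcon c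
    simp only [Finset.mem_biUnion]
    refine ⟨(S, t), ?_, ?_⟩
    · simp [A, hS]
    · simp only [B, Finset.mem_filter, Finset.mem_univ, true_and, Finset.mem_powersetCard]
      exact fun e he => h e he.1 he.2
  have h1 := (Finset.card_le_card hcover).trans Finset.card_biUnion_le
  have h2 : ∀ p ∈ A, (B p).card * k ^ (n.choose 2) = k ^ Fintype.card (Finset (Fin (k ^ m))) := by
    intro p hp
    have hc : p.1.card = n := by
      simp only [A, Finset.mem_product, Finset.mem_powersetCard] at hp
      exact hp.1.2
    have := bad_count k (Finset.powersetCard 2 p.1) p.2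
    rw [Finset.card_powersetCard, hc] at this
    exact this
  have h3 := Nat.mul_le_mul_right (k ^ (n.choose 2)) h1
  rw [Finset.sum_mul, Finset.sum_congr rfl h2, Finset.sum_const, smul_eq_mul] at h3
  have hU : (Finset.univ : Finset (Finset (Fin (k ^ m)) → Fin k)).card
      = k ^ Fintype.card (Finset (Fin (k ^ m))) := by
    rw [Finset.card_univ, Fintype.card_fun, Fintype.card_fin]
  rw [hU, mul_comm] at h3
  have h4 := Nat.le_of_mul_le_mul_right h3 (by positivity)
  have hA : A.card ≤ k ^ (m * n + 1) := by
    simp only [A, Finset.card_product, Finset.card_powersetCard, Finset.card_univ,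
      Fintype.card_fin]
    rw [pow_succ, pow_mul]
    exact Nat.mul_le_mul_right _ (Nat.choose_le_pow _ _)
  have h5 := (Nat.pow_le_pow_iff_right (by omega)).1 (h4.trans hA)
  have h6 : n.choose 2 * 2 = n * (n - 1) := by
    rw [Nat.choose_two_right, Nat.div_mul_cancel]
    exact (Nat.even_mul_pred_self n).two_dvd
  have h7 : 2 * m + 2 ≤ n := by omega
  obtain ⟨j, rfl⟩ : ∃ j, n = j + 1 := ⟨n - 1, by omega⟩
  simp only [Nat.add_sub_cancel] at h6
  nlinarith
end

section
/- For all natural numbers n, k, l with n ≥ l ≥ 2 and k ≥ 1 there exists a coloring of all l-element subsets of a set with k^⌊(n−l+1)^(l−1)/l!⌋ elements with k colors such that there is no monochromatic n-hyperclique. Formally: there is a function c from the l-element subsets of Fin (k^⌊(n−l+1)^(l−1)/l!⌋) to Fin k such that for every n-element subset S and every color t, not all l-element subsets of S are colored t by c. -/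
theorem ehr_count (N n k l : ℕ) (hk : 1 ≤ k) (h : N.choose n * k < k ^ (n.choose l)) :
    ∃ c : Finset (Fin N) → Fin k, ∀ S : Finset (Fin N), S.card = n →
        ∀ t : Fin k, ¬ (∀ e ⊆ S, e.card = l → c e = t) := by
  classical
  by_contra hcon
  push Not at hcon
  let B : Finset (Fin N) × Fin k → Finset (Finset (Fin N) → Fin k) := fun p =>
    Fintype.piFinset (fun e => if e ∈ p.1.powersetCard l then {p.2} else Finset.univ)
  let I : Finset (Finset (Fin N) × Fin k) := (Finset.univ.powersetCard n) ×ˢ Finset.univ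
  have hB : ∀ p ∈ I, (B p).card * k ^ (n.choose l) = k ^ (2 ^ N) := by
    rintro ⟨S, t⟩ hp
    have hS : S.card = n := by
      simp only [I, Finset.mem_product, Finset.mem_powersetCard] at hp
      exact hp.1.2
    have h1 : (B (S, t)).card = k ^ (Finset.univ.filter (fun e => ¬ e ∈ S.powersetCard l)).card := by
      simp only [B, Fintype.card_piFinset]
      rw [← Finset.prod_const, Finset.prod_filter]
      apply Finset.prod_congr rfl
      intro e _
      by_cases he : e ∈ S.powersetCard l
      · rw [if_pos he, if_neg (not_not.mpr he)]; simp
      · rw [if_neg he, if_pos he]; simp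
    have h2 : (Finset.univ.filter (fun e => e ∈ S.powersetCard l)).card = n.choose l := by
      rw [Finset.filter_mem_eq_inter, Finset.univ_inter, Finset.card_powersetCard, hS]
    have h3 := Finset.card_filter_add_card_filter_not (s := (Finset.univ : Finset (Finset (Fin N))))
      (fun e => e ∈ S.powersetCard l)
    rw [h2] at h3
    rw [h1, ← pow_add, add_comm, h3]
    simp
  have hU : (Finset.univ : Finset (Finset (Fin N) → Fin k)) ⊆ I.biUnion B := by
    intro c _
    obtain ⟨S, hS, t, ht⟩ := hcon c
    rw [Finset.mem_biUnion]
    refine ⟨(S, t), ?_, ?_⟩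
    · simp [I, hS]
    · simp only [B, Fintype.mem_piFinset]
      intro e
      by_cases he : e ∈ S.powersetCard l
      · rw [if_pos he]
        rw [Finset.mem_powersetCard] at he
        simpa using ht e he.1 he.2
      · rw [if_neg he]; simp
  have hc := (Finset.card_le_card hU).trans Finset.card_biUnion_le
  have hc1 : (Finset.univ : Finset (Finset (Fin N) → Fin k)).card = k ^ (2 ^ N) := by simp
  rw [hc1] at hc
  have hI : I.card = N.choose n * k := by simp [I]
  have h5 : k ^ (2 ^ N) * k ^ (n.choose l) ≤ (N.choose n * k) * k ^ (2 ^ N) := by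
    calc _ ≤ (∑ p ∈ I, (B p).card) * k ^ (n.choose l) := Nat.mul_le_mul_right _ hc
      _ = ∑ p ∈ I, k ^ (2 ^ N) := by
        rw [Finset.sum_mul]; exact Finset.sum_congr rfl hB
      _ = _ := by rw [Finset.sum_const, hI, smul_eq_mul]
  rw [mul_comm] at h5
  have := Nat.le_of_mul_le_mul_right h5 (by positivity)
  omega

theorem ehr_prod (N a k : ℕ) (hk : 1 ≤ k) (h : N ≤ a ^ k) :
    ∃ c : Finset (Fin N) → Fin k, ∀ S : Finset (Fin N), S.card = a + 1 →
        ∀ t : Fin k, ¬ (∀ e ⊆ S, e.card = 2 → c e = t) := by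
  classical
  have : Nonempty (Fin N ↪ (Fin k → Fin a)) := by
    apply Function.Embedding.nonempty_of_card_le
    simpa using h
  obtain ⟨f⟩ := this
  refine ⟨fun e => if h : ∃ i, ∃ x ∈ e, ∃ y ∈ e, f x i ≠ f y i then h.choose else ⟨0, hk⟩, ?_⟩
  intro S hS t ht
  have hinj : Set.InjOn (fun x => f x t) S := by
    intro x hx y hy hxy
    by_contra hne
    have h1 := ht {x, y} (by intro z hz; simp at hz; rcases hz with rfl | rfl <;> assumption)
      (Finset.card_pair hne)
    have hex : ∃ i, ∃ x' ∈ ({x, y} : Finset (Fin N)), ∃ y' ∈ ({x, y} : Finset (Fin N)),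
        f x' i ≠ f y' i := by
      obtain ⟨i, hi⟩ := Function.ne_iff.mp (fun h => hne (f.injective h))
      exact ⟨i, x, by simp, y, by simp, hi⟩
    simp only [dif_pos hex] at h1
    have h2 := hex.choose_spec
    rw [h1] at h2
    obtain ⟨x', hx', y', hy', hd⟩ := h2
    simp only [Finset.mem_insert, Finset.mem_singleton] at hx' hy'
    simp only at hxy
    rcases hx' with rfl | rfl <;> rcases hy' with rfl | rfl
    · exact hd rfl
    · exact hd hxy
    · exact hd hxy.symm
    · exact hd rfl
  have := Finset.card_le_card_of_injOn (t := (Finset.univ : Finset (Fin a))) (fun x => f x t)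
    (by intro x _; simp) hinj
  simp at this
  omega

theorem ehr_pow (a k : ℕ) (ha : 1 ≤ a) (h : a ≤ k) : k ^ (a / 2) ≤ a ^ k := by
  rcases Nat.lt_or_ge a 2 with h2 | h2
  · have : a = 1 := by omega
    subst this; simp
  have hq : 1 ≤ k / a := (Nat.one_le_div_iff (by omega)).mpr h
  have hlt : k ≤ a * (k / a + 1) := (Nat.lt_mul_div_succ k (by omega)).le
  have hle : a * (k / a) ≤ k := Nat.mul_div_le k a
  generalize k / a = q at *
  have hm : 2 * (a / 2) ≤ a := Nat.mul_div_le a 2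
  generalize a / 2 = m at *
  calc k ^ m ≤ (a * a ^ q) ^ m := by
        apply Nat.pow_le_pow_left
        refine hlt.trans (Nat.mul_le_mul_left _ ?_)
        calc q + 1 ≤ 2 ^ q := Nat.lt_two_pow_self
          _ ≤ a ^ q := Nat.pow_le_pow_left h2 q
    _ = a ^ ((q + 1) * m) := by rw [pow_mul, pow_succ']
    _ ≤ a ^ k := by
        apply Nat.pow_le_pow_right (by omega)
        nlinarith

theorem ehr_desc (n l : ℕ) (hln : l + 3 ≤ n) :
    n * (n - (l + 3) + 1) ^ (l + 2) < n.descFactorial (l + 3) := by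
  obtain ⟨d, rfl⟩ := Nat.exists_eq_add_of_le hln
  have e1 : l + 3 + d - (l + 3) + 1 = d + 1 := by omega
  rw [e1]
  have h := Nat.pow_sub_le_descFactorial (l + 1 + d) (l + 1)
  have e2 : l + 1 + d + 1 - (l + 1) = d + 1 := by omega
  rw [e2] at h
  have e3 : l + 3 + d = (l + 1 + d) + 1 + 1 := by omega
  rw [e3, Nat.succ_descFactorial_succ, Nat.succ_descFactorial_succ]
  apply Nat.mul_lt_mul_of_pos_left _ (by omega)
  rw [pow_succ']
  have : 0 < (d + 1) ^ (l + 1) := by positivity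
  calc _ < (l + 1 + d + 1) * (d + 1) ^ (l + 1) := Nat.mul_lt_mul_of_pos_right (by omega) this
    _ ≤ _ := Nat.mul_le_mul_left _ h

theorem erdos_hypergraph_ramsey (n k l : ℕ) (hln : l ≤ n) (hl : 2 ≤ l) (hk : 1 ≤ k) :
    ∃ c : Finset (Fin (k ^ ((n - l + 1) ^ (l - 1) / Nat.factorial l))) → Fin k,
      ∀ S : Finset (Fin (k ^ ((n - l + 1) ^ (l - 1) / Nat.factorial l))), S.card = n →
        ∀ t : Fin k, ¬ (∀ e ⊆ S, e.card = l → c e = t) := by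
  have hfac : ∀ N : ℕ, N.choose n * n.factorial ≤ N ^ n := by
    intro N
    rw [mul_comm, ← Nat.descFactorial_eq_factorial_mul_choose]
    exact Nat.descFactorial_le_pow N n
  rcases Nat.lt_or_ge l 3 with h3 | h3
  · obtain rfl : l = 2 := by omega
    obtain ⟨a, rfl⟩ : ∃ a, n = a + 1 := ⟨n - 1, by omega⟩
    have e : (a + 1 - 2 + 1) ^ (2 - 1) / Nat.factorial 2 = a / 2 := by
      have : a + 1 - 2 + 1 = a := by omega
      rw [this]; simp
    rw [e]
    rcases Nat.lt_or_ge k a with hka | hka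
    · apply ehr_count _ _ _ _ hk
      have h1 := hfac (k ^ (a / 2))
      rw [← pow_mul] at h1
      have h2 : a / 2 * (a + 1) ≤ (a + 1).choose 2 := by
        rw [Nat.choose_two_right, Nat.le_div_iff_mul_le (by norm_num)]
        have := Nat.div_mul_le_self a 2
        simp only [Nat.add_sub_cancel]
        nlinarith
      have h3 := h1.trans (Nat.pow_le_pow_right hk h2)
      have h4 : k < (a + 1).factorial :=
        lt_of_lt_of_le (by omega) (Nat.self_le_factorial (a + 1))
      have hp : 0 < k ^ ((a + 1).choose 2) := by positivity
      rcases Nat.eq_zero_or_pos ((k ^ (a / 2)).choose (a + 1)) with h0 | h0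
      · rw [h0]; simpa using hp
      · exact lt_of_lt_of_le (Nat.mul_lt_mul_of_pos_left h4 h0) h3
    · exact ehr_prod _ a k hk (ehr_pow a k (by omega) hka)
  · obtain ⟨r, rfl⟩ : ∃ r, l = r + 3 := ⟨l - 3, by omega⟩
    have hd := ehr_desc n r hln
    rw [Nat.descFactorial_eq_factorial_mul_choose] at hd
    have e : r + 3 - 1 = r + 2 := by omega
    rw [e]
    have hm := Nat.div_mul_le_self ((n - (r + 3) + 1) ^ (r + 2)) (r + 3).factorial
    generalize (n - (r + 3) + 1) ^ (r + 2) / (r + 3).factorial = m at *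
    have hlt : m * n < n.choose (r + 3) := by
      have : (r + 3).factorial * (m * n) < (r + 3).factorial * n.choose (r + 3) := by
        refine lt_of_le_of_lt ?_ hd
        calc _ = n * (m * (r + 3).factorial) := by ring
          _ ≤ _ := Nat.mul_le_mul_left _ hm
      exact Nat.lt_of_mul_lt_mul_left this
    apply ehr_count _ _ _ _ hk
    have h1 := hfac (k ^ m)
    rw [← pow_mul] at h1
    have hp : 0 < k ^ (n.choose (r + 3)) := by positivity
    have h2 : 2 ≤ n.factorial := le_trans (by omega) (Nat.self_le_factorial n)
    have h5 : k ^ (m * n) * k ≤ k ^ (n.choose (r + 3)) := by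
      rw [← pow_succ]; exact Nat.pow_le_pow_right hk hlt
    have h6 : (k ^ m).choose n * 2 ≤ k ^ (m * n) := (Nat.mul_le_mul_left _ h2).trans h1
    have h7 := Nat.mul_le_mul_right k h6
    nlinarith
end

section
/- Let n ≥ 1 and s ≥ 1 be natural numbers, let M_1, …, M_s be subsets of {1, …, n}, and let a be a positive real number. If 2^(a²) ≥ (2s)^(2n), then there exists a coloring x : {1,…,n} → {−1, 1} such that for every k ∈ {1,…,s} the absolute value of Δ_{M_k}(x) = Σ_{j ∈ M_k} x(j) is strictly less than a. (Equivalently, for each k the numbers of red and blue elements of M_k differ by less than a.) -/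
lemma mgf_bound (n : ℕ) (S : Finset (Fin n)) (l : ℝ) :
    ∑ x ∈ Fintype.piFinset (fun _ : Fin n => ({1, -1} : Finset ℝ)), Real.exp (l * ∑ j ∈ S, x j)
      ≤ (2 * Real.exp (l ^ 2 / 2)) ^ n := by
  have h1 : ∀ x : Fin n → ℝ, Real.exp (l * ∑ j ∈ S, x j)
      = ∏ j, (if j ∈ S then Real.exp (l * x j) else 1) := by
    intro x
    rw [Finset.mul_sum, Real.exp_sum, Finset.prod_ite_mem, Finset.univ_inter]
  simp_rw [h1]
  rw [← Finset.prod_univ_sum (fun _ : Fin n => ({1, -1} : Finset ℝ))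
    (fun j y => if j ∈ S then Real.exp (l * y) else 1)]
  have h2 : ∀ j ∈ (Finset.univ : Finset (Fin n)),
      (∑ y ∈ ({1, -1} : Finset ℝ), if j ∈ S then Real.exp (l * y) else 1)
        ≤ 2 * Real.exp (l ^ 2 / 2) := by
    intro j _
    rw [Finset.sum_pair (by norm_num)]
    split_ifs
    · have := Real.cosh_le_exp_half_sq l
      rw [Real.cosh_eq] at this
      rw [mul_one, mul_neg_one]
      linarith
    · have := Real.one_le_exp (show (0 : ℝ) ≤ l ^ 2 / 2 by positivity)
      linarith
  refine (Finset.prod_le_prod (fun j _ => ?_) h2).trans (by simp)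
  exact Finset.sum_nonneg fun y _ => by split_ifs <;> positivity

theorem discrepancy_bound (n s : ℕ) (hn : 1 ≤ n) (hs : 1 ≤ s)
    (M : Fin s → Finset (Fin n)) (a : ℝ) (ha : 0 < a)
    (h : ((2 * s : ℕ) : ℝ) ^ (2 * n) ≤ (2 : ℝ) ^ (a ^ 2)) :
    ∃ x : Fin n → ℝ, (∀ j, x j = 1 ∨ x j = -1) ∧
      ∀ k : Fin s, |∑ j ∈ M k, x j| < a := by
  by_contra hc
  push Not at hc
  have hn0 : (0 : ℝ) < n := by exact_mod_cast hn
  set T := Fintype.piFinset (fun _ : Fin n => ({1, -1} : Finset ℝ)) with hT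
  have hcard : T.card = 2 ^ n := by
    rw [hT, Fintype.card_piFinset]
    simp [Finset.card_pair (show (1 : ℝ) ≠ -1 by norm_num)]
  set l : ℝ := a / n with hl
  have hl0 : 0 < l := by positivity
  have key : ∀ x ∈ T, Real.exp (l * a) <
      ∑ k, (Real.exp (l * ∑ j ∈ M k, x j) + Real.exp (-l * ∑ j ∈ M k, x j)) := by
    intro x hx
    obtain ⟨k, hk⟩ := hc x (fun j => by simpa using Fintype.mem_piFinset.1 hx j)
    refine lt_of_lt_of_le ?_ (Finset.single_le_sum (fun i _ => by positivity) (Finset.mem_univ k))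
    have p1 := Real.exp_pos (l * ∑ j ∈ M k, x j)
    have p2 := Real.exp_pos (-l * ∑ j ∈ M k, x j)
    rcases le_abs.1 hk with h1 | h1
    · have : Real.exp (l * a) ≤ Real.exp (l * ∑ j ∈ M k, x j) :=
        Real.exp_le_exp.2 (by nlinarith)
      linarith
    · have : Real.exp (l * a) ≤ Real.exp (-l * ∑ j ∈ M k, x j) :=
        Real.exp_le_exp.2 (by nlinarith)
      linarith
  have hne : T.Nonempty := by
    rw [← Finset.card_pos, hcard]; positivity
  have h1 := Finset.sum_lt_sum_of_nonempty hne key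
  rw [Finset.sum_const, hcard, Finset.sum_comm] at h1
  have h2 : ∑ k, ∑ x ∈ T, (Real.exp (l * ∑ j ∈ M k, x j) + Real.exp (-l * ∑ j ∈ M k, x j))
      ≤ ∑ k : Fin s, 2 * (2 * Real.exp (l ^ 2 / 2)) ^ n := by
    refine Finset.sum_le_sum fun k _ => ?_
    rw [Finset.sum_add_distrib]
    have e1 := mgf_bound n (M k) l
    have e2 := mgf_bound n (M k) (-l)
    rw [neg_sq] at e2
    linarith
  have h3 := lt_of_lt_of_le h1 h2
  rw [Finset.sum_const, Finset.card_univ, Fintype.card_fin, mul_pow, ← Real.exp_nat_mul,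
    nsmul_eq_mul, nsmul_eq_mul] at h3
  push_cast at h3
  set b : ℝ := a ^ 2 / (2 * n) with hb
  have e1 : l * a = b + b := by rw [hl, hb]; field_simp; ring
  have e2 : (n : ℝ) * (l ^ 2 / 2) = b := by rw [hl, hb]; field_simp
  rw [e1, e2, Real.exp_add] at h3
  have h4 : Real.exp b < 2 * s := by
    have p : (0 : ℝ) < 2 ^ n * Real.exp b := by positivity
    refine lt_of_mul_lt_mul_left (a := 2 ^ n * Real.exp b) ?_ p.le
    linarith
  have h5 : Real.exp (a ^ 2) < ((2 * s : ℕ) : ℝ) ^ (2 * n) := by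
    have e3 : Real.exp (a ^ 2) = Real.exp b ^ (2 * n) := by
      rw [← Real.exp_nat_mul]; congr 1; rw [hb]; push_cast; field_simp
    rw [e3]; push_cast
    exact pow_lt_pow_left₀ h4 (Real.exp_pos _).le (by omega)
  have h6 : (2 : ℝ) ^ (a ^ 2) ≤ Real.exp (a ^ 2) := by
    rw [← Real.exp_one_rpow (a ^ 2)]
    exact Real.rpow_le_rpow (by norm_num) (by linarith [Real.add_one_le_exp (1 : ℝ)]) (by positivity)
  linarith
end

section
/- Let n ≥ 1 be a natural number, M a subset of {1,…,n}, and a > 0 a real number. Then the number of colorings x : {1,…,n} → {−1, 1} for which Δ_M(x) = Σ_{j ∈ M} x(j) ≥ a is strictly less than 2^(n − a²/(2n)) (where the exponent is a real number). -/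
theorem count_large_discrepancy_colorings (n : ℕ) (hn : 1 ≤ n)
    (M : Finset (Fin n)) (a : ℝ) (ha : 0 < a) :
    (Nat.card {x : Fin n → ℝ // (∀ j, x j = 1 ∨ x j = -1) ∧
        a ≤ ∑ j ∈ M, x j} : ℝ) < (2 : ℝ) ^ ((n : ℝ) - a ^ 2 / (2 * n)) := by
  classical
  have hn0 : (0 : ℝ) < n := by exact_mod_cast hn
  set P : Finset (Fin n → ℝ) := Fintype.piFinset (fun _ => ({1, -1} : Finset ℝ)) with hP
  have hcard : Nat.card {x : Fin n → ℝ // (∀ j, x j = 1 ∨ x j = -1) ∧ a ≤ ∑ j ∈ M, x j}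
      = (P.filter (fun x => a ≤ ∑ j ∈ M, x j)).card := by
    apply Nat.subtype_card
    intro x
    simp [hP, Fintype.mem_piFinset]
  rw [hcard]
  set t : ℝ := a / n with ht
  have ht0 : 0 < t := div_pos ha hn0
  have h1 : ((P.filter (fun x => a ≤ ∑ j ∈ M, x j)).card : ℝ) * Real.exp (t * a)
      ≤ ∑ x ∈ P, ∏ j, (if j ∈ M then Real.exp (t * x j) else 1) := by
    rw [← nsmul_eq_mul, ← Finset.sum_const]
    calc _ ≤ ∑ x ∈ P.filter (fun x => a ≤ ∑ j ∈ M, x j),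
          ∏ j, (if j ∈ M then Real.exp (t * x j) else 1) := by
          apply Finset.sum_le_sum
          intro x hx
          have hx2 := (Finset.mem_filter.1 hx).2
          rw [Finset.prod_ite_mem, Finset.univ_inter, ← Real.exp_sum, ← Finset.mul_sum]
          gcongr
      _ ≤ _ := by
          apply Finset.sum_le_sum_of_subset_of_nonneg (Finset.filter_subset _ _)
          intro x _ _
          apply Finset.prod_nonneg
          intro j _
          split_ifs <;> positivity
  have h2 : ∑ x ∈ P, ∏ j, (if j ∈ M then Real.exp (t * x j) else 1)
      ≤ (2 * Real.exp (t ^ 2 / 2)) ^ n := by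
    have := Finset.prod_univ_sum (fun _ : Fin n => ({1, -1} : Finset ℝ))
      (fun j y => if j ∈ M then Real.exp (t * y) else 1)
    rw [hP, ← this]
    calc _ ≤ ∏ j : Fin n, (2 * Real.exp (t ^ 2 / 2)) := by
          apply Finset.prod_le_prod
          · intro j _
            apply Finset.sum_nonneg
            intro y _
            split_ifs <;> positivity
          · intro j _
            rw [Finset.sum_pair (by norm_num)]
            split_ifs
            · have := Real.cosh_le_exp_half_sq t
              rw [Real.cosh_eq] at this
              rw [mul_one, mul_neg_one]
              linarith
            · have : 1 ≤ Real.exp (t ^ 2 / 2) := Real.one_le_exp (by positivity)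
              linarith
      _ = _ := by simp
  have h3 := h1.trans h2
  have hs : 0 < a ^ 2 / (2 * n) := by positivity
  have h4 : (2 * Real.exp (t ^ 2 / 2)) ^ n
      = (2 : ℝ) ^ n * Real.exp (-(a ^ 2 / (2 * n))) * Real.exp (t * a) := by
    rw [mul_pow, ← Real.exp_nat_mul, mul_assoc, ← Real.exp_add]
    congr 2
    rw [ht]
    field_simp
    ring
  rw [h4] at h3
  have h5 := le_of_mul_le_mul_right h3 (Real.exp_pos _)
  refine h5.trans_lt ?_
  rw [sub_eq_add_neg, Real.rpow_add two_pos, Real.rpow_natCast]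
  apply mul_lt_mul_of_pos_left _ (by positivity)
  rw [Real.rpow_def_of_pos two_pos]
  apply Real.exp_lt_exp.2
  nlinarith [Real.log_two_lt_d9]
end

section
/- There exists a simple graph on 10^7 vertices that contains neither a 51-clique nor a 51-anticlique. Formally: there is a simple graph G on Fin 10000000 such that G is 51-clique-free and the complement of G is 51-clique-free. -/
lemma card_mono_le {E : Type*} [Fintype E] [DecidableEq E] (A : Finset E) (b : Bool) :
    (Fintype.piFinset (fun e => if e ∈ A then ({b} : Finset Bool) else Finset.univ)).card
      * 2 ^ A.card = 2 ^ Fintype.card E := by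
  rw [Fintype.card_piFinset]
  have h : ∀ e : E, (if e ∈ A then ({b} : Finset Bool) else Finset.univ).card
      = if e ∈ A then 1 else 2 := by
    intro e
    split_ifs <;> simp
  simp only [h]
  rw [Finset.prod_ite, Finset.prod_const_one, one_mul, Finset.prod_const, ← pow_add]
  congr 1
  have h2 : Finset.univ.filter (fun e => e ∉ A) = Aᶜ := by
    ext
    simp
  rw [h2, add_comm, Finset.card_add_card_compl]

lemma exists_coloring {E ι : Type*} [Fintype E] [DecidableEq E] (T : Finset ι)
    (A : ι → Finset E) (m : ℕ) (hA : ∀ i ∈ T, (A i).card = m) (hT : T.card * 2 < 2 ^ m) :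
    ∃ f : E → Bool, ∀ i ∈ T, ∀ b : Bool, ¬ ∀ e ∈ A i, f e = b := by
  classical
  by_contra! hcon
  let P : ι × Bool → Finset (E → Bool) := fun p =>
    Fintype.piFinset (fun e => if e ∈ A p.1 then ({p.2} : Finset Bool) else Finset.univ)
  have hsub : (Finset.univ : Finset (E → Bool)) ⊆
      (T ×ˢ (Finset.univ : Finset Bool)).biUnion P := by
    intro f _
    obtain ⟨i, hi, b, hb⟩ := hcon f
    refine Finset.mem_biUnion.2 ⟨(i, b), by simp [hi], ?_⟩
    refine Fintype.mem_piFinset.2 fun e => ?_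
    by_cases he : e ∈ A i
    · simp [he, hb e he]
    · simp [he]
  have h1 := (Finset.card_le_card hsub).trans Finset.card_biUnion_le
  rw [Finset.card_univ, Fintype.card_fun, Fintype.card_bool] at h1
  have h2 := Nat.mul_le_mul_right (2 ^ m) h1
  rw [Finset.sum_mul, Finset.sum_congr rfl (g := fun _ => 2 ^ Fintype.card E)] at h2
  · rw [Finset.sum_const, Finset.card_product, Finset.card_univ, Fintype.card_bool,
      smul_eq_mul, mul_comm] at h2
    have h3 := Nat.le_of_mul_le_mul_right h2 (by positivity)
    omega
  · intro p hp
    rw [← hA p.1 (Finset.mem_product.1 hp).1]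
    exact card_mono_le _ _

lemma exists_graph_aux (N k : ℕ) (h : N.choose k * 2 < 2 ^ (k.choose 2)) :
    ∃ G : SimpleGraph (Fin N), G.CliqueFree k ∧ Gᶜ.CliqueFree k := by
  obtain ⟨f, hf⟩ := exists_coloring (E := Sym2 (Fin N))
    (Finset.powersetCard k (Finset.univ : Finset (Fin N)))
    (fun s => s.offDiag.image Sym2.mk.uncurry) (k.choose 2)
    (by
      intro s hs
      rw [Sym2.card_image_offDiag, (Finset.mem_powersetCard.1 hs).2])
    (by rw [Finset.card_powersetCard, Finset.card_univ, Fintype.card_fin]; exact h)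
  let G : SimpleGraph (Fin N) :=
    { Adj := fun a b => a ≠ b ∧ f s(a, b) = true
      symm := ⟨fun a b hab => ⟨hab.1.symm, by rw [Sym2.eq_swap]; exact hab.2⟩⟩
      loopless := ⟨fun a ha => ha.1 rfl⟩ }
  refine ⟨G, ?_, ?_⟩
  · intro s hs
    refine hf s (Finset.mem_powersetCard.2 ⟨Finset.subset_univ _, hs.card_eq⟩) true ?_
    intro e he
    obtain ⟨⟨a, b⟩, hab, rfl⟩ := Finset.mem_image.1 he
    obtain ⟨ha, hb, hne⟩ := Finset.mem_offDiag.1 hab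
    exact (hs.isClique ha hb hne).2
  · intro s hs
    refine hf s (Finset.mem_powersetCard.2 ⟨Finset.subset_univ _, hs.card_eq⟩) false ?_
    intro e he
    obtain ⟨⟨a, b⟩, hab, rfl⟩ := Finset.mem_image.1 he
    obtain ⟨ha, hb, hne⟩ := Finset.mem_offDiag.1 hab
    have h1 := (SimpleGraph.compl_adj _ _ _).1 (hs.isClique ha hb hne)
    by_contra h2
    exact h1.2 ⟨hne, by simpa using h2⟩

theorem exists_graph_no_51_clique_or_anticlique :
    ∃ G : SimpleGraph (Fin 10000000),
      G.CliqueFree 51 ∧ Gᶜ.CliqueFree 51 := by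
  apply exists_graph_aux
  have h1 : Nat.choose 10000000 51 ≤ 10000000 ^ 51 := Nat.choose_le_pow _ _
  have h2 : Nat.choose 51 2 = 1275 := by rw [Nat.choose_two_right]
  rw [h2]
  refine lt_of_le_of_lt (Nat.mul_le_mul_right 2 h1) ?_
  set_option exponentiation.threshold 2000 in
  norm_num
end

section
/- There exists a coloring of the edges of the complete graph on 1000 vertices with 4 colors such that there is no monochromatic 12-clique. Formally: there is a function c from the 2-element subsets of Fin 1000 to Fin 4 such that for every 12-element subset S of Fin 1000 and every color t ∈ Fin 4, not all 2-element subsets of S are colored t by c. -/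
theorem exists_coloring_no_monochromatic_12_clique :
    ∃ c : Finset (Fin 1000) → Fin 4,
      ∀ S : Finset (Fin 1000), S.card = 12 →
        ∀ t : Fin 4, ¬ (∀ e ⊆ S, e.card = 2 → c e = t) := by
  classical
  refine ⟨fun e => if ∀ x ∈ e, ∀ y ∈ e, x.val % 10 = y.val % 10 → x = y then 0
    else if ∀ x ∈ e, ∀ y ∈ e, x.val / 10 % 10 = y.val / 10 % 10 → x = y then 1 else 2, ?_⟩
  intro S hS t h
  have key : ∀ f : ℕ → ℕ, (∀ n < 1000, f n < 10) →
      ∃ x ∈ S, ∃ y ∈ S, x ≠ y ∧ f x.val = f y.val := by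
    intro f hf
    apply Finset.exists_ne_map_eq_of_card_lt_of_maps_to (t := Finset.range 10)
      (f := fun x : Fin 1000 => f x.val)
    · simp [hS]
    · intro x _
      simpa using hf x.val x.isLt
  have pair : ∀ x ∈ S, ∀ y ∈ S, x ≠ y →
      (if x.val % 10 ≠ y.val % 10 then (0 : Fin 4)
        else if x.val / 10 % 10 ≠ y.val / 10 % 10 then 1 else 2) = t := by
    intro x hx y hy hxy
    have h1 := h {x, y} (by intro z; simp; rintro (rfl | rfl) <;> assumption)
      (Finset.card_pair hxy)
    rw [← h1]
    have inj : ∀ f : ℕ → ℕ, (∀ a ∈ ({x, y} : Finset (Fin 1000)), ∀ b ∈ ({x, y} : Finset (Fin 1000)),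
        f a.val = f b.val → a = b) ↔ f x.val ≠ f y.val := by
      intro f
      constructor
      · intro H e
        exact hxy (H x (by simp) y (by simp) e)
      · intro H a ha b hb e
        simp only [Finset.mem_insert, Finset.mem_singleton] at ha hb
        rcases ha with rfl | rfl <;> rcases hb with rfl | rfl
        · rfl
        · exact absurd e H
        · exact absurd e.symm H
        · rfl
    have i0 := inj (fun n => n % 10)
    have i1 := inj (fun n => n / 10 % 10)
    simp only [i0, i1]
  obtain ⟨x, hx, y, hy, hxy, e0⟩ := key (fun n => n % 10) (fun n _ => by omega)
  obtain ⟨x', hx', y', hy', hxy', e1⟩ := key (fun n => n / 10 % 10) (fun n _ => by omega)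
  obtain ⟨u, hu, v, hv, huv, e2⟩ := key (fun n => n / 100) (fun n _ => by omega)
  have p0 := pair x hx y hy hxy
  have p1 := pair x' hx' y' hy' hxy'
  have p2 := pair u hu v hv huv
  have huv' : u.val ≠ v.val := fun h => huv (Fin.ext h)
  split_ifs at p0 p1 p2 <;> first | omega | (subst p0; simp at p1 p2)
end

section
/- There exists a family H of 3-element subsets of a 1000-element set such that there is no 10-element subset S with every 3-element subset of S belonging to H, and no 10-element subset S with no 3-element subset of S belonging to H. Formally: there is a set H of 3-element subsets of Fin 1000 such that for every 10-element subset S of Fin 1000, neither all 3-element subsets of S lie in H nor all 3-element subsets of S lie outside H. -/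
theorem property_B_aux {α : Type*} [DecidableEq α] (U : Finset α) (F : Finset (Finset α)) (k : ℕ)
    (hF : ∀ T ∈ F, T ⊆ U ∧ T.card = k) (hk : F.card * 2 < 2 ^ k) :
    ∃ H ⊆ U, ∀ T ∈ F, ¬ T ⊆ H ∧ ¬ Disjoint H T := by
  by_contra hcon
  push Not at hcon
  have hsub : U.powerset ⊆ F.biUnion (fun T => Finset.Icc T U ∪ (U \ T).powerset) := by
    intro H hH
    rw [Finset.mem_powerset] at hH
    obtain ⟨T, hT, h⟩ := hcon H hH
    rw [Finset.mem_biUnion]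
    refine ⟨T, hT, ?_⟩
    rw [Finset.mem_union, Finset.mem_Icc, Finset.mem_powerset]
    by_cases hTH : T ⊆ H
    · exact Or.inl ⟨hTH, hH⟩
    · exact Or.inr (Finset.subset_sdiff.2 ⟨hH, h hTH⟩)
  have h1 := Finset.card_le_card hsub
  have h2 : (F.biUnion (fun T => Finset.Icc T U ∪ (U \ T).powerset)).card
      ≤ F.card * (2 * 2 ^ (U.card - k)) := by
    apply Finset.card_biUnion_le_card_mul
    intro T hT
    obtain ⟨hTU, hc⟩ := hF T hT
    refine (Finset.card_union_le _ _).trans ?_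
    rw [Finset.card_Icc_finset hTU, Finset.card_powerset, Finset.card_sdiff_of_subset hTU, hc]
    omega
  rw [Finset.card_powerset] at h1
  by_cases hne : F.Nonempty
  · obtain ⟨T, hT⟩ := hne
    obtain ⟨hTU, hc⟩ := hF T hT
    have hle : k ≤ U.card := hc ▸ Finset.card_le_card hTU
    have h3 : 2 ^ U.card = 2 ^ k * 2 ^ (U.card - k) := by
      rw [← pow_add, Nat.add_sub_cancel' hle]
    have h4 : F.card * 2 * 2 ^ (U.card - k) < 2 ^ k * 2 ^ (U.card - k) :=
      Nat.mul_lt_mul_of_pos_right hk (by positivity)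
    rw [← mul_assoc] at h2
    omega
  · obtain ⟨T, hT, -⟩ := hcon ∅ (Finset.empty_subset _)
    exact hne ⟨T, hT⟩

theorem choose_aux : Nat.choose 1000 10 * 2 < 2 ^ 120 := by
  have h := Nat.choose_le_pow_div (α := ℚ) 10 1000
  have : (Nat.choose 1000 10 : ℚ) * 2 < 2 ^ 120 := by
    refine lt_of_le_of_lt (mul_le_mul_of_nonneg_right h (by norm_num)) ?_
    norm_num [Nat.factorial]
  exact_mod_cast this

theorem exists_hypergraph_no_10_hyperclique_or_antihyperclique :
    ∃ H : Set (Finset (Fin 1000)), (∀ A ∈ H, A.card = 3) ∧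
      ∀ S : Finset (Fin 1000), S.card = 10 →
        ¬ (∀ A ⊆ S, A.card = 3 → A ∈ H) ∧ ¬ (∀ A ⊆ S, A.card = 3 → A ∉ H) := by
  obtain ⟨H, hHU, hH⟩ := property_B_aux (Finset.powersetCard 3 (Finset.univ : Finset (Fin 1000)))
    ((Finset.powersetCard 10 (Finset.univ : Finset (Fin 1000))).image (Finset.powersetCard 3)) 120
    (by
      intro T hT
      obtain ⟨S, hS, rfl⟩ := Finset.mem_image.1 hT
      refine ⟨Finset.powersetCard_mono (Finset.subset_univ _), ?_⟩
      rw [Finset.card_powersetCard, (Finset.mem_powersetCard.1 hS).2]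
      rfl)
    (by
      refine lt_of_le_of_lt (Nat.mul_le_mul_right 2 Finset.card_image_le) ?_
      rw [Finset.card_powersetCard, Finset.card_univ, Fintype.card_fin]
      exact choose_aux)
  refine ⟨{A | A ∈ H}, fun A hA => (Finset.mem_powersetCard.1 (hHU hA)).2, fun S hS => ?_⟩
  obtain ⟨h1, h2⟩ := hH (Finset.powersetCard 3 S) (Finset.mem_image_of_mem _
    (Finset.mem_powersetCard.2 ⟨Finset.subset_univ _, hS⟩))
  refine ⟨fun h => h1 fun A hA => ?_, fun h => h2 (Finset.disjoint_right.2 fun A hA => ?_)⟩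
  · obtain ⟨ha, hb⟩ := Finset.mem_powersetCard.1 hA
    exact h A ha hb
  · obtain ⟨ha, hb⟩ := Finset.mem_powersetCard.1 hA
    exact h A ha hb
end

section
/- For any family M_1, …, M_300 of subsets of {1, …, 1000} there exists a coloring x : {1,…,1000} → {−1, 1} such that for every k ∈ {1,…,300} the absolute value of Δ_{M_k}(x) = Σ_{j ∈ M_k} x(j) is at most 150. -/
theorem potential_aux {ι κ : Type*} [DecidableEq ι] [Fintype κ] (M : κ → Finset ι) (l : ℝ)
    (S : Finset ι) :
    ∃ x : ι → ℤ, (∀ j, x j = 1 ∨ x j = -1) ∧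
      ∑ k, Real.cosh (l * ((∑ j ∈ S, if j ∈ M k then x j else 0 : ℤ) : ℝ))
        ≤ Fintype.card κ * Real.cosh l ^ S.card := by
  induction S using Finset.induction_on with
  | empty => exact ⟨fun _ => 1, by simp, by simp⟩
  | insert a S ha ih =>
    obtain ⟨x, hx, hb⟩ := ih
    have key : ∀ e : ℤ, ∀ k, (∑ j ∈ insert a S, if j ∈ M k then Function.update x a e j else 0)
        = (if a ∈ M k then e else 0) + ∑ j ∈ S, if j ∈ M k then x j else 0 := by
      intro e k
      rw [Finset.sum_insert ha]
      congr 1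
      · simp
      · refine Finset.sum_congr rfl fun j hj => ?_
        have : j ≠ a := fun h => ha (h ▸ hj)
        simp [this]
    have hval : ∀ e : ℤ, (e = 1 ∨ e = -1) → ∀ j, Function.update x a e j = 1 ∨
        Function.update x a e j = -1 := by
      intro e he j
      by_cases h : j = a
      · subst h; simpa using he
      · simpa [h] using hx j
    by_contra! hcon
    have h1 := hcon _ (hval 1 (Or.inl rfl))
    have h2 := hcon _ (hval (-1) (Or.inr rfl))
    simp only [key] at h1 h2
    rw [Finset.card_insert_of_notMem ha, pow_succ] at h1 h2
    have h3 := add_lt_add h1 h2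
    rw [← Finset.sum_add_distrib] at h3
    have h4 : ∑ k, (Real.cosh (l * (((if a ∈ M k then 1 else 0) +
          ∑ j ∈ S, if j ∈ M k then x j else 0 : ℤ) : ℝ)) +
        Real.cosh (l * (((if a ∈ M k then -1 else 0) +
          ∑ j ∈ S, if j ∈ M k then x j else 0 : ℤ) : ℝ))) ≤
        ∑ k, 2 * Real.cosh l * Real.cosh (l * ((∑ j ∈ S, if j ∈ M k then x j else 0 : ℤ) : ℝ)) := by
      refine Finset.sum_le_sum fun k _ => ?_
      generalize (∑ j ∈ S, if j ∈ M k then x j else 0 : ℤ) = u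
      split_ifs
      · push_cast
        rw [show l * (1 + (u : ℝ)) = l * u + l by ring,
          show l * (-1 + (u : ℝ)) = l * u - l by ring, Real.cosh_add, Real.cosh_sub]
        apply le_of_eq; ring
      · rw [zero_add]
        nlinarith [Real.one_le_cosh l, Real.one_le_cosh (l * u)]
    rw [← Finset.mul_sum] at h4
    have h5 := mul_le_mul_of_nonneg_left hb
      (by linarith [Real.cosh_pos l] : (0:ℝ) ≤ 2 * Real.cosh l)
    linarith

theorem cosh_bound_aux (N : ℕ) (hN : N = 1000) :
    (300 : ℝ) * Real.cosh (3/20) ^ N < Real.cosh (3/20 * 151) := by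
  have h1 : Real.cosh (3/20) ^ N ≤ Real.exp (45/4) := by
    calc Real.cosh (3/20) ^ N ≤ Real.exp ((3/20)^2/2) ^ N :=
          pow_le_pow_left₀ (Real.cosh_pos _).le (Real.cosh_le_exp_half_sq _) _
      _ = Real.exp (45/4) := by
          rw [← Real.exp_nat_mul, hN]; norm_num
  have h2 : Real.exp (45/4) * Real.exp (45/4) ≤ Real.exp (3/20*151) := by
    rw [← Real.exp_add]; apply Real.exp_le_exp.mpr; norm_num
  have h3 : (600 : ℝ) < Real.exp (45/4) := by
    have h : (2 : ℝ) ≤ Real.exp 1 := by linarith [Real.add_one_le_exp (1:ℝ)]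
    calc (600 : ℝ) < 2 ^ 11 := by norm_num
      _ ≤ Real.exp 1 ^ 11 := pow_le_pow_left₀ (by norm_num) h _
      _ = Real.exp 11 := by rw [← Real.exp_nat_mul]; norm_num
      _ ≤ _ := Real.exp_le_exp.mpr (by norm_num)
  have h4 : Real.cosh (3/20*151) = (Real.exp (3/20*151) + Real.exp (-(3/20*151))) / 2 :=
    Real.cosh_eq _
  have h5 := Real.exp_pos (-(3/20*151))
  nlinarith [Real.exp_pos (45/4)]

theorem pioneers_discrepancy (M : Fin 300 → Finset (Fin 1000)) :
    ∃ x : Fin 1000 → ℤ, (∀ j, x j = 1 ∨ x j = -1) ∧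
      ∀ k : Fin 300, |∑ j ∈ M k, x j| ≤ 150 := by
  obtain ⟨x, hx, hb⟩ := potential_aux M (3/20) Finset.univ
  refine ⟨x, hx, fun k => ?_⟩
  by_contra! hk
  have hb2 := cosh_bound_aux (Finset.univ : Finset (Fin 1000)).card (by rw [Finset.card_univ, Fintype.card_fin])
  rw [Fintype.card_fin] at hb
  have h1 := Finset.single_le_sum (f := fun k => Real.cosh (3/20 *
      ((∑ j, if j ∈ M k then x j else 0 : ℤ) : ℝ)))
    (fun i _ => (Real.cosh_pos _).le) (Finset.mem_univ k)
  have h2 : (∑ j, if j ∈ M k then x j else 0) = ∑ j ∈ M k, x j := by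
    rw [← Finset.sum_filter, Finset.filter_mem_eq_inter, Finset.univ_inter]
  simp only [h2] at h1
  have h3 : Real.cosh (3/20*151) ≤ Real.cosh (3/20 * ((∑ j ∈ M k, x j : ℤ) : ℝ)) := by
    rw [Real.cosh_le_cosh, abs_mul, abs_mul]
    have : (151 : ℝ) ≤ |((∑ j ∈ M k, x j : ℤ) : ℝ)| := by
      have : (151 : ℤ) ≤ |∑ j ∈ M k, x j| := hk
      exact_mod_cast this
    rw [abs_of_pos (by norm_num : (0:ℝ) < 151)]
    exact mul_le_mul_of_nonneg_left this (abs_nonneg _)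
  push_cast at *
  linarith
end

section
/- The number of simple graphs on the vertex set Fin 10000000 that contain a 51-clique or a 51-anticlique is strictly less than 2^(10^7·(10^7−1)/2), i.e. strictly less than the total number of simple graphs on these vertices. -/
theorem aux_card_graphs (V : Type) [Fintype V] :
    Nat.card (SimpleGraph V) = 2 ^ ((Fintype.card V).choose 2) := by
  classical
  have e : SimpleGraph V ≃ Set {e : Sym2 V // ¬ e.IsDiag} :=
    { toFun := fun G => {e | e.1 ∈ G.edgeSet}
      invFun := fun S => SimpleGraph.fromEdgeSet (Subtype.val '' S)
      left_inv := by
        intro G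
        ext u v
        simp only [SimpleGraph.fromEdgeSet_adj, Set.mem_image, Set.mem_ofPred_eq, Subtype.exists]
        constructor
        · rintro ⟨⟨a, _, h, rfl⟩, _⟩
          exact h
        · intro h
          exact ⟨⟨s(u, v), by simpa using h.ne, h, rfl⟩, h.ne⟩
      right_inv := by
        intro S
        ext ⟨e, he⟩
        simp [SimpleGraph.edgeSet_fromEdgeSet, he] }
  rw [Nat.card_congr e, Nat.card_eq_fintype_card, Fintype.card_set, Sym2.card_subtype_not_diag]

theorem aux_clique_count (V : Type) [Fintype V] (s : Finset V) :
    Nat.card {G : SimpleGraph V // G.IsClique s} * 2 ^ (s.card.choose 2) ≤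
      2 ^ ((Fintype.card V).choose 2) := by
  classical
  have h1 := aux_card_graphs s
  rw [Fintype.card_coe] at h1
  rw [← h1, ← aux_card_graphs V, ← Nat.card_prod]
  let f : {G : SimpleGraph V // G.IsClique s} × SimpleGraph s → SimpleGraph V := fun p =>
    { Adj := fun u v => (∃ (hu : u ∈ s) (hv : v ∈ s), p.2.Adj ⟨u, hu⟩ ⟨v, hv⟩) ∨
        (¬ (u ∈ s ∧ v ∈ s) ∧ p.1.1.Adj u v)
      symm := ⟨by
        rintro u v (⟨hu, hv, h⟩ | ⟨h, h'⟩)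
        · exact Or.inl ⟨hv, hu, h.symm⟩
        · exact Or.inr ⟨fun t => h ⟨t.2, t.1⟩, h'.symm⟩⟩
      loopless := ⟨by
        rintro u (⟨hu, hv, h⟩ | ⟨h, h'⟩)
        · exact h.ne rfl
        · exact h'.ne rfl⟩ }
  apply Nat.card_le_card_of_injective f
  rintro ⟨⟨G, hG⟩, H⟩ ⟨⟨G', hG'⟩, H'⟩ h
  have key : ∀ u v, (f ⟨⟨G, hG⟩, H⟩).Adj u v ↔ (f ⟨⟨G', hG'⟩, H'⟩).Adj u v := by
    intro u v; rw [h]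
  simp only [f] at key
  have e1 : G = G' := by
    ext u v
    by_cases hs : u ∈ s ∧ v ∈ s
    · by_cases huv : u = v
      · subst huv; simp
      · exact ⟨fun _ => hG' hs.1 hs.2 huv, fun _ => hG hs.1 hs.2 huv⟩
    · have := key u v
      grind
  have e2 : H = H' := by
    ext ⟨u, hu⟩ ⟨v, hv⟩
    have := key u v
    simpa [hu, hv] using this
  subst e1 e2
  rfl

theorem aux_general (N k M : ℕ) (hM : M = N.choose 2)
    (hk : 2 * N ^ k < 2 ^ (k.choose 2)) :
    Nat.card {G : SimpleGraph (Fin N) // ¬ G.CliqueFree k ∨ ¬ Gᶜ.CliqueFree k} < 2 ^ M := by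
  classical
  subst hM
  let A : Finset (Fin N) → Finset (SimpleGraph (Fin N)) := fun s =>
    Finset.univ.filter fun G => G.IsClique s
  let B : Finset (Fin N) → Finset (SimpleGraph (Fin N)) := fun s =>
    Finset.univ.filter fun G => Gᶜ.IsClique s
  let P := Finset.powersetCard k (Finset.univ : Finset (Fin N))
  have hA : ∀ s ∈ P, (A s).card * 2 ^ (k.choose 2) ≤ 2 ^ (N.choose 2) := by
    intro s hs
    have := aux_clique_count (Fin N) s
    rw [(Finset.mem_powersetCard.1 hs).2, Fintype.card_fin, Nat.card_eq_fintype_card,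
      Fintype.card_subtype] at this
    exact this
  have hAB : ∀ s, (B s).card = (A s).card := by
    intro s
    apply Finset.card_bij (fun G _ => Gᶜ)
    · intro G hG
      simpa [A, B] using hG
    · intro G _ G' _ h
      exact compl_injective h
    · intro G hG
      exact ⟨Gᶜ, by simpa [A, B] using hG, compl_compl G⟩
  have hle : Nat.card {G : SimpleGraph (Fin N) // ¬ G.CliqueFree k ∨ ¬ Gᶜ.CliqueFree k} ≤
      ∑ s ∈ P, 2 * (A s).card := by
    rw [Nat.card_eq_fintype_card, Fintype.card_subtype]
    calc _ ≤ (P.biUnion fun s => A s ∪ B s).card := by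
            apply Finset.card_le_card
            intro G hG
            simp only [Finset.mem_filter, Finset.mem_univ, true_and, SimpleGraph.CliqueFree,
              not_forall, not_not] at hG
            rw [Finset.mem_biUnion]
            rcases hG with ⟨s, hs⟩ | ⟨s, hs⟩
            · exact ⟨s, by simp [P, Finset.mem_powersetCard, hs.card_eq],
                Finset.mem_union_left _ (by simpa [A] using hs.isClique)⟩
            · exact ⟨s, by simp [P, Finset.mem_powersetCard, hs.card_eq],
                Finset.mem_union_right _ (Finset.mem_filter.2 ⟨Finset.mem_univ _, hs.isClique⟩)⟩
      _ ≤ ∑ s ∈ P, (A s ∪ B s).card := Finset.card_biUnion_le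
      _ ≤ _ := by
            apply Finset.sum_le_sum
            intro s _
            have := Finset.card_union_le (A s) (B s)
            rw [hAB] at this
            omega
  refine lt_of_le_of_lt hle ?_
  have hpos : 0 < 2 ^ (N.choose 2) := by positivity
  have hP : P.card ≤ N ^ k := by
    simp only [P, Finset.card_powersetCard, Finset.card_univ, Fintype.card_fin]
    exact Nat.choose_le_pow N k
  apply lt_of_mul_lt_mul_right (a := 2 ^ (k.choose 2)) _ (Nat.zero_le _)
  calc (∑ s ∈ P, 2 * (A s).card) * 2 ^ (k.choose 2)
      = ∑ s ∈ P, 2 * ((A s).card * 2 ^ (k.choose 2)) := by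
        rw [Finset.sum_mul]; simp only [mul_assoc]
    _ ≤ ∑ s ∈ P, 2 * 2 ^ (N.choose 2) :=
        Finset.sum_le_sum fun s hs => Nat.mul_le_mul_left 2 (hA s hs)
    _ = P.card * (2 * 2 ^ (N.choose 2)) := by rw [Finset.sum_const, smul_eq_mul]
    _ ≤ N ^ k * (2 * 2 ^ (N.choose 2)) := Nat.mul_le_mul_right _ hP
    _ = 2 ^ (N.choose 2) * (2 * N ^ k) := by ring
    _ < 2 ^ (N.choose 2) * 2 ^ (k.choose 2) := Nat.mul_lt_mul_of_pos_left hk hpos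

theorem count_ramsey_graphs_lt :
    Nat.card {G : SimpleGraph (Fin 10000000) //
        ¬ G.CliqueFree 51 ∨ ¬ Gᶜ.CliqueFree 51} <
      2 ^ (10 ^ 7 * (10 ^ 7 - 1) / 2) := by
  apply aux_general
  · rw [Nat.choose_two_right]; norm_num
  · have h : Nat.choose 51 2 = 255 * 5 := by rw [Nat.choose_two_right]
    rw [h, pow_mul]
    norm_num
end

section
/- The number of families H of 3-element subsets of Fin 1000 for which there exists a 10-element subset S of Fin 1000 such that either every 3-element subset of S belongs to H or no 3-element subset of S belongs to H, is strictly less than 2^C(1000,3), i.e. strictly less than the total number of such families. -/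
theorem count_aux (n : ℕ) (h1 : n.choose 10 * 2 < 2 ^ 120) (h2 : 120 ≤ n.choose 3) :
    Nat.card {H : Set (Finset (Fin n)) // (∀ A ∈ H, A.card = 3) ∧
        ∃ S : Finset (Fin n), S.card = 10 ∧
          ((∀ A ⊆ S, A.card = 3 → A ∈ H) ∨ (∀ A ⊆ S, A.card = 3 → A ∉ H))} <
      2 ^ Nat.choose n 3 := by
  classical
  set U : Finset (Finset (Fin n)) := Finset.powersetCard 3 Finset.univ with hU
  have hUc : U.card = n.choose 3 := by simp [hU]
  let B : Finset (Finset (Finset (Fin n))) :=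
    (Finset.powersetCard 10 (Finset.univ : Finset (Fin n))).biUnion fun S =>
      Finset.Icc (Finset.powersetCard 3 S) U ∪ (U \ Finset.powersetCard 3 S).powerset
  have hB : B.card ≤ n.choose 10 * (2 * 2 ^ (n.choose 3 - 120)) := by
    have h := Finset.card_biUnion_le_card_mul
      (Finset.powersetCard 10 (Finset.univ : Finset (Fin n)))
      (fun S => Finset.Icc (Finset.powersetCard 3 S) U ∪ (U \ Finset.powersetCard 3 S).powerset)
      (2 * 2 ^ (n.choose 3 - 120)) (by
        intro S hS
        have hSc : S.card = 10 := (Finset.mem_powersetCard.1 hS).2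
        have hsub : Finset.powersetCard 3 S ⊆ U :=
          Finset.powersetCard_mono (Finset.subset_univ S)
        have hTc : (Finset.powersetCard 3 S).card = 120 := by
          rw [Finset.card_powersetCard, hSc]; decide
        refine (Finset.card_union_le _ _).trans ?_
        rw [Finset.card_Icc_finset hsub, Finset.card_powerset,
          Finset.card_sdiff_of_subset hsub, hTc, hUc, two_mul])
    simpa using h
  have hlt : n.choose 10 * (2 * 2 ^ (n.choose 3 - 120)) < 2 ^ n.choose 3 := by
    obtain ⟨k, hk⟩ := Nat.exists_eq_add_of_le h2
    rw [hk, Nat.add_sub_cancel_left, pow_add, ← mul_assoc]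
    exact Nat.mul_lt_mul_of_pos_right h1 (by positivity)
  refine lt_of_le_of_lt ?_ (hB.trans_lt hlt)
  rw [← Nat.card_eq_finsetCard B]
  refine Nat.card_le_card_of_injective
    (fun H => (⟨H.1.toFinset, ?_⟩ : {x // x ∈ B})) ?_
  · obtain ⟨H, h3, S, hS, hH⟩ := H
    refine Finset.mem_biUnion.2 ⟨S, by simp [Finset.mem_powersetCard, hS], ?_⟩
    rw [Finset.mem_union, Finset.mem_Icc, Finset.mem_powerset]
    have hHU : H.toFinset ⊆ U := by
      intro A hA
      rw [Set.mem_toFinset] at hA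
      exact Finset.mem_powersetCard.2 ⟨Finset.subset_univ _, h3 A hA⟩
    rcases hH with h | h
    · left
      refine ⟨fun A hA => ?_, hHU⟩
      rw [Finset.mem_powersetCard] at hA
      exact Set.mem_toFinset.2 (h A hA.1 hA.2)
    · right
      intro A hA
      refine Finset.mem_sdiff.2 ⟨hHU hA, fun hA' => ?_⟩
      rw [Finset.mem_powersetCard] at hA'
      exact h A hA'.1 hA'.2 (Set.mem_toFinset.1 hA)
  · intro H K hHK
    apply Subtype.ext
    have := congrArg Subtype.val hHK
    exact Set.toFinset_inj.1 this

theorem count_ramsey_hypergraphs_lt :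
    Nat.card {H : Set (Finset (Fin 1000)) // (∀ A ∈ H, A.card = 3) ∧
        ∃ S : Finset (Fin 1000), S.card = 10 ∧
          ((∀ A ⊆ S, A.card = 3 → A ∈ H) ∨ (∀ A ⊆ S, A.card = 3 → A ∉ H))} <
      2 ^ Nat.choose 1000 3 :=
  count_aux 1000 (by norm_num [Nat.choose_eq_descFactorial_div_factorial, Nat.descFactorial, Nat.factorial]) (by norm_num [Nat.choose_eq_descFactorial_div_factorial, Nat.descFactorial, Nat.factorial])
end
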